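/- Let r, s ∈ ℤ with r ≤ s, and let Q denote the finite quotient 𝔬-module ϖ^r𝔬ⁿ / 2ϖ^s𝔬ⁿ. Then the ℂ-vector space of odd functions {f : Q → ℂ : f(−x) = −f(x) for all x ∈ Q} has dimension (1/2)·q^{en}·(q^{(s−r)n} − 1). -/

import Mathlib

/-- The fractional ideal `ϖ^m𝔬 = {x ∈ k : val(x) ≥ m}`, as an additive subgroup of `k`. -/
def valAddSubgroup {k : Type*} [Field k] (v : AddValuation k (WithTop ℤ)) (m : ℤ) :
    AddSubgroup k where
  carrier := {x : k | (m : WithTop ℤ) ≤ v x}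
  zero_mem' := by simp [v.map_zero]
  add_mem' := by
    intro a b ha hb
    exact le_trans (le_min ha hb) (v.map_add a b)
  neg_mem' := by
    intro a ha
    simpa [v.map_neg] using ha

/-- The lattice `ϖ^m𝔬ⁿ` inside `kⁿ`. -/
def valLattice {k : Type*} [Field k] (v : AddValuation k (WithTop ℤ)) (n : ℕ) (m : ℤ) :
    AddSubgroup (Fin n → k) :=
  AddSubgroup.pi Set.univ fun _ => valAddSubgroup v m

/-- The odd complex-valued functions on an additive group `Q`, as a `ℂ`-subspace of
`Q → ℂ`. -/
noncomputable def oddFns (Q : Type*) [AddCommGroup Q] : Submodule ℂ (Q → ℂ) where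
  carrier := {f : Q → ℂ | ∀ x : Q, f (-x) = -f x}
  zero_mem' := fun _ => by simp
  add_mem' := by
    intro f g hf hg x
    simp [hf x, hg x]; ring
  smul_mem' := by
    intro c f hf x
    simp [hf x]

/-! On a finite abelian group `Q`, the map `f ↦ (f - f ∘ neg) / 2` projects `Q → ℂ` onto the odd
functions. Its trace is half the number of points moved by negation, so the dimension is
`(|Q| - |Q[2]|) / 2 = |Q[2]| (|Q / Q[2]| - 1) / 2`. For `Q = ϖ^r𝔬ⁿ / 2ϖ^s𝔬ⁿ` the 2-torsion is
`ϖ^s𝔬ⁿ / 2ϖ^s𝔬ⁿ`, and both factors are indices of lattices. Such an index is a power of `q`, since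
multiplication by an element of valuation `m` carries `𝔬 / ϖ𝔬` to `ϖ^m𝔬 / ϖ^(m+1)𝔬`. -/

section OddFunctions

theorem trace_funLeft (R : Type*) [CommRing R] {α : Type*} [Finite α] (f : α → α) :
    LinearMap.trace R (α → R) (LinearMap.funLeft R R f) = (Function.fixedPoints f).ncard := by
  classical
  have := Fintype.ofFinite α
  rw [LinearMap.trace_eq_matrix_trace R (Pi.basisFun R α), Matrix.trace]
  simp [LinearMap.funLeft_apply, Pi.single_apply, ← Set.ncard_coe_finset, Function.fixedPoints,
    Function.IsFixedPt]

variable (Q : Type*) [AddCommGroup Q]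

/-- The operator sending a function to its odd part `x ↦ (f x - f (-x)) / 2`; it is the projection
whose trace computes the dimension of the odd functions. -/
noncomputable def oddPart : (Q → ℂ) →ₗ[ℂ] Q → ℂ :=
  (1 / 2 : ℂ) • (LinearMap.id - LinearMap.funLeft ℂ ℂ Neg.neg)

theorem oddPart_apply (f : Q → ℂ) (x : Q) : oddPart Q f x = 1 / 2 * (f x - f (-x)) := rfl

theorem isProj_oddPart : LinearMap.IsProj (oddFns Q) (oddPart Q) where
  map_mem f x := by
    rw [oddPart_apply, oddPart_apply, neg_neg]
    ring
  map_id f hf := by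
    ext x
    rw [oddPart_apply, hf x]
    ring

theorem trace_oddPart [Finite Q] :
    LinearMap.trace ℂ (Q → ℂ) (oddPart Q) =
      1 / 2 * (Nat.card Q - (Function.fixedPoints (Neg.neg : Q → Q)).ncard) := by
  have := Fintype.ofFinite Q
  rw [oddPart, map_smul, map_sub, LinearMap.trace_id, trace_funLeft,
    Module.finrank_fintype_fun_eq_card, Nat.card_eq_fintype_card, smul_eq_mul]

theorem fixedPoints_neg_eq_ker_nsmul_two :
    Function.fixedPoints (Neg.neg : Q → Q) = (nsmulAddMonoidHom 2 : Q →+ Q).ker := by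
  ext x
  rw [Function.mem_fixedPoints, Function.IsFixedPt, SetLike.mem_coe, AddMonoidHom.mem_ker,
    nsmulAddMonoidHom_apply, two_nsmul, neg_eq_iff_add_eq_zero]

theorem two_mul_finrank_oddFns_add_card_ker_nsmul_two [Finite Q] :
    2 * Module.finrank ℂ (oddFns Q) + Nat.card (nsmulAddMonoidHom 2 : Q →+ Q).ker =
      Nat.card Q := by
  have trace_eq := (isProj_oddPart Q).trace.symm.trans (trace_oddPart Q)
  rw [fixedPoints_neg_eq_ker_nsmul_two] at trace_eq
  have : 2 * (Module.finrank ℂ (oddFns Q) : ℂ) + Nat.card (nsmulAddMonoidHom 2 : Q →+ Q).ker =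
      Nat.card Q := by
    rw [trace_eq, ← SetLike.coe_sort_coe, Nat.card_coe_set_eq]
    ring
  exact_mod_cast this

theorem two_mul_finrank_oddFns [Finite Q] :
    2 * Module.finrank ℂ (oddFns Q) =
      Nat.card (nsmulAddMonoidHom 2 : Q →+ Q).ker *
        ((nsmulAddMonoidHom 2 : Q →+ Q).ker.index - 1) := by
  rw [Nat.mul_sub, mul_one, AddSubgroup.card_mul_index]
  exact Nat.eq_sub_of_add_eq (two_mul_finrank_oddFns_add_card_ker_nsmul_two Q)

end OddFunctions

section Quotient

variable {A : Type*} [AddCommGroup A]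

theorem comap_mk_ker_nsmul (N : AddSubgroup A) (m : ℕ) :
    (nsmulAddMonoidHom m : A ⧸ N →+ A ⧸ N).ker.comap (QuotientAddGroup.mk' N) =
      N.comap (nsmulAddMonoidHom m) := by
  ext x
  exact QuotientAddGroup.eq_zero_iff (m • x)

theorem index_ker_nsmul_quotient (N : AddSubgroup A) (m : ℕ) :
    (nsmulAddMonoidHom m : A ⧸ N →+ A ⧸ N).ker.index =
      (N.comap (nsmulAddMonoidHom m)).index := by
  rw [← comap_mk_ker_nsmul,
    AddSubgroup.index_comap_of_surjective _ (QuotientAddGroup.mk'_surjective N)]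

theorem card_ker_nsmul_quotient (N : AddSubgroup A) (m : ℕ) :
    Nat.card (nsmulAddMonoidHom m : A ⧸ N →+ A ⧸ N).ker =
      N.relIndex (N.comap (nsmulAddMonoidHom m)) := by
  have relIndex_eq_card_map := AddSubgroup.relIndex_ker (N.comap (nsmulAddMonoidHom m))
    (QuotientAddGroup.mk' N)
  rw [QuotientAddGroup.ker_mk'] at relIndex_eq_card_map
  rw [relIndex_eq_card_map, ← comap_mk_ker_nsmul,
    AddSubgroup.map_comap_eq_self_of_surjective (QuotientAddGroup.mk'_surjective N)]

theorem two_mul_finrank_oddFns_quotient (N : AddSubgroup A) [N.FiniteIndex] :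
    2 * Module.finrank ℂ (oddFns (A ⧸ N)) =
      N.relIndex (N.comap (nsmulAddMonoidHom 2)) *
        ((N.comap (nsmulAddMonoidHom 2)).index - 1) := by
  rw [two_mul_finrank_oddFns, card_ker_nsmul_quotient, index_ker_nsmul_quotient]

theorem two_mul_finrank_oddFns_quotient_addSubgroupOf {N L : AddSubgroup A}
    (hNL : N.comap (nsmulAddMonoidHom 2) ≤ L) (hfin : N.relIndex L ≠ 0) :
    2 * Module.finrank ℂ (oddFns (L ⧸ N.addSubgroupOf L)) =
      N.relIndex (N.comap (nsmulAddMonoidHom 2)) *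
        ((N.comap (nsmulAddMonoidHom 2)).relIndex L - 1) := by
  have : (N.addSubgroupOf L).FiniteIndex := ⟨hfin⟩
  have comap_addSubgroupOf : (N.addSubgroupOf L).comap (nsmulAddMonoidHom 2) =
      (N.comap (nsmulAddMonoidHom 2)).addSubgroupOf L := rfl
  rw [two_mul_finrank_oddFns_quotient, comap_addSubgroupOf, AddSubgroup.relIndex_addSubgroupOf hNL]
  rfl

end Quotient

section RelIndex

theorem relIndex_comap_comap_of_surjective {A B : Type*} [AddGroup A] [AddGroup B] {f : A →+ B}
    (hf : Function.Surjective f) (H K : AddSubgroup B) :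
    (H.comap f).relIndex (K.comap f) = H.relIndex K := by
  rw [AddSubgroup.relIndex_comap, AddSubgroup.map_comap_eq_self_of_surjective hf]

theorem relIndex_pi_univ_const {ι A : Type*} [Fintype ι] [AddGroup A] (H : ι → AddSubgroup A)
    (K : AddSubgroup A) :
    (AddSubgroup.pi Set.univ H).relIndex (AddSubgroup.pi Set.univ fun _ ↦ K) =
      ∏ i, (H i).relIndex K := by
  let incl : (ι → K) →+ (ι → A) := K.subtype.compLeft ι
  have range_incl : incl.range = AddSubgroup.pi Set.univ fun _ ↦ K := by
    ext x
    refine ⟨?_, fun hx ↦ ⟨fun i ↦ ⟨x i, hx i trivial⟩, rfl⟩⟩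
    rintro ⟨y, rfl⟩ i -
    exact (y i).2
  have comap_incl : (AddSubgroup.pi Set.univ H).comap incl =
      AddSubgroup.pi Set.univ fun i ↦ (H i).addSubgroupOf K := rfl
  rw [← range_incl, ← AddSubgroup.index_comap, comap_incl, AddSubgroup.index_pi]
  rfl

end RelIndex

section Valuation

variable {k : Type*} [Field k] (v : AddValuation k (WithTop ℤ))

theorem zero_le_map_natCast (m : ℕ) : 0 ≤ v (m : k) := by
  induction m with
  | zero => simp
  | succ m ih =>
    rw [Nat.cast_succ]
    exact v.map_le_add ih v.map_one.ge

theorem mem_valAddSubgroup {m : ℤ} {x : k} :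
    x ∈ valAddSubgroup v m ↔ (m : WithTop ℤ) ≤ v x := Iff.rfl

theorem antitone_valAddSubgroup : Antitone (valAddSubgroup v) :=
  fun _ _ hab _ hx ↦ (WithTop.coe_le_coe.2 hab).trans hx

theorem antitone_valLattice (n : ℕ) : Antitone (valLattice v n) :=
  fun _ _ hab _ hx i hi ↦ antitone_valAddSubgroup v hab (hx i hi)

variable {v}

theorem comap_mulLeft_valAddSubgroup {c : k} {a : ℤ} (hc : v c = a) (m : ℤ) :
    (valAddSubgroup v (a + m)).comap (AddMonoidHom.mulLeft c) = valAddSubgroup v m := by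
  ext x
  rw [AddSubgroup.mem_comap, AddMonoidHom.coe_mulLeft, mem_valAddSubgroup, mem_valAddSubgroup,
    v.map_mul, hc, WithTop.coe_add]
  exact WithTop.add_le_add_iff_left WithTop.coe_ne_top

theorem comap_nsmul_valLattice {j : ℕ} {a : ℤ} (hj : v (j : k) = a) (n : ℕ) (m : ℤ) :
    (valLattice v n (a + m)).comap (nsmulAddMonoidHom j) = valLattice v n m := by
  ext x
  refine forall₂_congr fun i _ ↦ ?_
  rw [← comap_mulLeft_valAddSubgroup hj m, nsmulAddMonoidHom_apply, Pi.smul_apply, nsmul_eq_mul]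
  rfl

theorem relIndex_valAddSubgroup_add {c : k} {a : ℤ} (hc : v c = a) (l m : ℤ) :
    (valAddSubgroup v (a + l)).relIndex (valAddSubgroup v (a + m)) =
      (valAddSubgroup v l).relIndex (valAddSubgroup v m) := by
  have hc₀ : c ≠ 0 := by
    rintro rfl
    exact WithTop.top_ne_coe (v.map_zero.symm.trans hc)
  rw [← comap_mulLeft_valAddSubgroup hc l, ← comap_mulLeft_valAddSubgroup hc m,
    relIndex_comap_comap_of_surjective (mul_left_surjective₀ hc₀)]

theorem relIndex_valAddSubgroup_add_natCast (hsurj : ∀ m : ℤ, ∃ x : k, v x = m) (a : ℤ) (d : ℕ) :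
    (valAddSubgroup v (a + d)).relIndex (valAddSubgroup v a) =
      (valAddSubgroup v 1).relIndex (valAddSubgroup v 0) ^ d := by
  induction d with
  | zero => simp
  | succ d ih =>
    obtain ⟨c, hc⟩ := hsurj (a + d)
    have last_step : (valAddSubgroup v (a + d + 1)).relIndex (valAddSubgroup v (a + d)) =
        (valAddSubgroup v 1).relIndex (valAddSubgroup v 0) := by
      simpa only [add_zero] using relIndex_valAddSubgroup_add hc 1 0
    rw [Nat.cast_succ, ← add_assoc, ← AddSubgroup.relIndex_mul_relIndex _ (valAddSubgroup v (a + d))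
      _ (antitone_valAddSubgroup v (by lia)) (antitone_valAddSubgroup v (by lia)),
      last_step, ih, pow_succ']

theorem relIndex_valLattice (hsurj : ∀ m : ℤ, ∃ x : k, v x = m) (n : ℕ) {a b : ℤ} (hab : a ≤ b) :
    (valLattice v n b).relIndex (valLattice v n a) =
      (valAddSubgroup v 1).relIndex (valAddSubgroup v 0) ^ ((b - a) * n).toNat := by
  obtain ⟨d, rfl⟩ := Int.le.dest hab
  have exponent : ((a + d - a) * n).toNat = d * n := by
    rw [add_sub_cancel_left, ← Nat.cast_mul, Int.toNat_natCast]
  rw [valLattice, valLattice, relIndex_pi_univ_const, Finset.prod_const, Finset.card_fin,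
    relIndex_valAddSubgroup_add_natCast hsurj, ← pow_mul, exponent]

end Valuation

/-- For `r ≤ s`, the space of odd functions on `Q = ϖ^r𝔬ⁿ / 2ϖ^s𝔬ⁿ` has
dimension `(1/2)·q^{en}·(q^{(s−r)n} − 1)` (stated with both sides multiplied by 2). -/
theorem dim_odd_functions {k : Type*} [Field k]
    (hchar : (2 : k) ≠ 0)
    (v : AddValuation k (WithTop ℤ))
    (hsurj : ∀ m : ℤ, ∃ x : k, v x = (m : WithTop ℤ))
    (ϖ : k) (hϖ : v ϖ = (1 : ℤ))
    (e : ℤ) (he : v (2 : k) = (e : WithTop ℤ))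
    (q : ℕ)
    (hres_fin : Finite
      (valAddSubgroup v 0 ⧸ (valAddSubgroup v 1).addSubgroupOf (valAddSubgroup v 0)))
    (hq : Nat.card
      (valAddSubgroup v 0 ⧸ (valAddSubgroup v 1).addSubgroupOf (valAddSubgroup v 0)) = q)
    (n : ℕ) (r s : ℤ) (hrs : r ≤ s) :
    2 * Module.finrank ℂ
        (oddFns
          (valLattice v n r ⧸ (valLattice v n (e + s)).addSubgroupOf (valLattice v n r))) =
      q ^ (e * n).toNat * (q ^ ((s - r) * n).toNat - 1) := by
  have he₀ : 0 ≤ e := WithTop.coe_le_coe.1 (he ▸ zero_le_map_natCast v 2)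
  have hq' : (valAddSubgroup v 1).relIndex (valAddSubgroup v 0) = q := hq
  have hq₀ : q ≠ 0 := hq ▸ Nat.card_pos.ne'
  have comap_two_nsmul : (valLattice v n (e + s)).comap (nsmulAddMonoidHom 2) = valLattice v n s :=
    comap_nsmul_valLattice he n s
  have finite_index : (valLattice v n (e + s)).relIndex (valLattice v n r) ≠ 0 := by
    rw [relIndex_valLattice hsurj n (by lia), hq']
    exact pow_ne_zero _ hq₀
  have index_two_torsion : (valLattice v n (e + s)).relIndex (valLattice v n s) =
      q ^ (e * n).toNat := by
    rw [relIndex_valLattice hsurj n (by lia), hq', add_sub_cancel_right]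
  rw [two_mul_finrank_oddFns_quotient_addSubgroupOf (comap_two_nsmul ▸ antitone_valLattice v n hrs)
      finite_index, comap_two_nsmul, index_two_torsion, relIndex_valLattice hsurj n hrs, hq']
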